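/- Let s be an even integer with s ≥ 6. Then: (i) ‖f_0‖_∞ = 1 on [−1,1], and the function equal to f_0 on (−1,1) and to 0 outside has total variation 2s on ℝ; (ii) the total variation of f_1 on [−1,1] equals 2 and ‖f_1‖_∞ = |f_1(0)| = tan(π/(2s)). -/

import Mathlib

noncomputable section

/-- iterated integrals of the sign of the Chebyshev polynomial: the perfect B-spline chain -/
def fspline (s : ℕ) : ℕ → ℝ → ℝ
  | 0 => fun x => (-1 : ℝ) ^ (s - 1) * Real.sign ((Polynomial.Chebyshev.U ℝ ((s : ℤ) - 1)).eval x)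
  | (k + 1) => fun x => ∫ t in (-1 : ℝ)..x, fspline s k t

/-- the scaled perfect B-spline g̃_{s-1} -/
def gtilde (s : ℕ) (x : ℝ) : ℝ := fspline s (s - 1) (2 * x)

/-- discrete norm ‖g̃‖_{1,N} -/
def gnorm (s N : ℕ) : ℝ :=
  ∑ k ∈ Finset.Icc (-(N : ℤ)) (N : ℤ), gtilde s ((k : ℝ) / (2 * ((N : ℝ) + 1)))

/-- the trigonometric kernel σ̃_N (real-valued) -/
def sigmaT (s N : ℕ) (t : ℝ) : ℝ :=
  ((1 / (gnorm s N : ℂ)) *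
      ∑ k ∈ Finset.Icc (-(N : ℤ)) (N : ℤ),
        (gtilde s ((k : ℝ) / (2 * ((N : ℝ) + 1))) : ℂ) * Complex.exp ((k : ℂ) * t * Complex.I)).re

/-- constants c_{l,s} -/
def cConst : ℕ → ℕ → ℝ
  | 0, s => 1.02 * (Nat.factorial (s - 1)) * 2 ^ s * s
  | 1, s => 1.02 * (Nat.factorial (s - 1)) * 2 ^ s * (2 * s)
  | 2, s => 1.02 * (Nat.factorial (s - 1)) * 2 ^ s * (4 * s + 1)
  | _, s => 1.02 * (Nat.factorial (s - 1)) * 2 ^ s * (9 * s - 2)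

end

open scoped Real

/-!
Under `x = -cos θ` the identity `U_{s-1}(cos θ) sin θ = sin (s θ)` turns `f_0` into the square wave
`sign (sin (s θ))`, and a monotone change of variable preserves variation. The `s` half-periods in
`[0, π]` contribute `2` each to the variation of `f_0`. On the `k`-th of them `f_1` has slope
`(-1) ^ k` in `x`, so it moves exactly as much as `x` does, and its extrema sit at the nodes
`-cos (k π / s)`. There the recurrence for `f_1` sums to `± tan (π / (2 s)) sin (k π / s)`, whose
absolute value is largest at the middle node `0` when `s` is even.
-/

section Variation

open Set

variable {α E F : Type*} [LinearOrder α] [PseudoEMetricSpace E] [PseudoEMetricSpace F]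

lemma eVariationOn_congr_edist {f : α → E} {g : α → F} {s : Set α}
    (h : ∀ x ∈ s, ∀ y ∈ s, edist (f x) (f y) = edist (g x) (g y)) :
    eVariationOn f s = eVariationOn g s := by
  unfold eVariationOn
  congr! 3 with p i
  exact h _ (p.2.2.2 _) _ (p.2.2.2 _)

lemma eVariationOn_Icc_congr_edist_of_monotone {f : α → E} {g : α → F} {u : ℕ → α}
    (hu : Monotone u) {n : ℕ}
    (h : ∀ k < n, ∀ x ∈ Icc (u k) (u (k + 1)), ∀ y ∈ Icc (u k) (u (k + 1)),
      edist (f x) (f y) = edist (g x) (g y)) :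
    eVariationOn f (Icc (u 0) (u n)) = eVariationOn g (Icc (u 0) (u n)) := by
  rw [← eVariationOn.sum' f hu, ← eVariationOn.sum' g hu]
  exact Finset.sum_congr rfl fun k hk => eVariationOn_congr_edist (h k (Finset.mem_range.1 hk))

lemma eVariationOn_univ_eq_Icc {f : α → E} {a b : α} (hab : a ≤ b)
    (ha : ∀ x ≤ a, f x = f a) (hb : ∀ x, b ≤ x → f x = f b) :
    eVariationOn f univ = eVariationOn f (Icc a b) := by
  have hproj : f ∘ (fun x => (projIcc a b hab x : α)) = f := by
    funext x
    rcases le_total x a with hxa | hax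
    · simp [projIcc_of_le_left hab hxa, ha x hxa]
    rcases le_total x b with hxb | hbx
    · simp [projIcc_of_mem hab ⟨hax, hxb⟩]
    · simp [projIcc_of_right_le hab hbx, hb x hbx]
  have himage : (fun x => (projIcc a b hab x : α)) '' univ = Icc a b := by
    rw [image_univ, range_comp' Subtype.val, range_projIcc, image_univ, Subtype.range_coe]
  have hmono : MonotoneOn (fun x => (projIcc a b hab x : α)) univ :=
    fun _ _ _ _ hxy => monotone_projIcc hab hxy
  rw [← himage, ← eVariationOn.comp_eq_of_monotoneOn f _ hmono, hproj]

/-- Collapsing the open interval to one of its points `m` is monotone and does not change `f`, so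
the variation is that of `f` on the three points `a, m, b`. -/
lemma eVariationOn_Icc_of_eqOn_Ioo {f : α → E} {a b : α} {c : E} (hab : (Ioo a b).Nonempty)
    (hc : ∀ x ∈ Ioo a b, f x = c) :
    eVariationOn f (Icc a b) = edist (f a) c + edist c (f b) := by
  obtain ⟨m, ham, hmb⟩ := hab
  let collapse : α → α := fun x => if x ≤ a then a else if b ≤ x then b else m
  have hmono : MonotoneOn collapse (Icc a b) := by
    intro x _ y _ hxy
    grind
  have hcollapse : EqOn (f ∘ collapse) f (Icc a b) := by
    intro x hx
    grind
  have himage : collapse '' Icc a b = {a, m} ∪ {m, b} := by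
    ext y
    constructor
    · rintro ⟨x, -, rfl⟩
      grind
    · intro hy
      exact ⟨y, by grind⟩
  rw [← eVariationOn.congr hcollapse, eVariationOn.comp_eq_of_monotoneOn f _ hmono, himage,
    eVariationOn.union f (x := m) (by simp [IsGreatest, ham.le]) (by simp [IsLeast, hmb.le]),
    eVariationOn.pair, eVariationOn.pair, hc m ⟨ham, hmb⟩]

end Variation

lemma monotoneOn_neg_cos : MonotoneOn (fun θ => -Real.cos θ) (Set.Icc 0 π) :=
  Real.antitoneOn_cos.neg

lemma image_neg_cos_Icc : (fun θ => -Real.cos θ) '' Set.Icc 0 π = Set.Icc (-1) 1 := by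
  rw [← Set.image_image Neg.neg, Real.bijOn_cos.image_eq, Set.image_neg_Icc, neg_neg]

lemma eVariationOn_comp_neg_cos {E : Type*} [PseudoEMetricSpace E] (f : ℝ → E) :
    eVariationOn (fun θ => f (-Real.cos θ)) (Set.Icc 0 π) = eVariationOn f (Set.Icc (-1) 1) := by
  rw [← image_neg_cos_Icc, ← eVariationOn.comp_eq_of_monotoneOn f _ monotoneOn_neg_cos]
  rfl

lemma real_sign_mul (x y : ℝ) : Real.sign (x * y) = Real.sign x * Real.sign y := by
  rcases lt_trichotomy x 0 with hx | rfl | hx <;> rcases lt_trichotomy y 0 with hy | rfl | hy <;>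
    simp [Real.sign_of_pos, Real.sign_of_neg, mul_pos_of_neg_of_neg, mul_neg_of_neg_of_pos,
      mul_neg_of_pos_of_neg, *]

lemma real_sign_neg_one_pow (n : ℕ) : Real.sign ((-1) ^ n) = (-1) ^ n := by
  rcases neg_one_pow_eq_or ℝ n with h | h <;> simp [h, Real.sign_neg]

lemma abs_real_sign_le_one (x : ℝ) : |Real.sign x| ≤ 1 := by
  rcases Real.sign_apply_eq x with h | h | h <;> simp [h]

lemma measurable_real_sign : Measurable Real.sign :=
  Measurable.ite measurableSet_Iio measurable_const
    (Measurable.ite measurableSet_Ioi measurable_const measurable_const)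

lemma real_sign_sin_of_mem_Ioo {k : ℕ} {t : ℝ} (ht : t ∈ Set.Ioo (k * π) ((k + 1 : ℕ) * π)) :
    Real.sign (Real.sin t) = (-1) ^ k := by
  have hpos : 0 < Real.sin (t - k * π) := by
    apply Real.sin_pos_of_pos_of_lt_pi (sub_pos.2 ht.1)
    have := ht.2
    push_cast at this
    linarith
  have hsin : Real.sin t = (-1) ^ k * Real.sin (t - k * π) := by
    rw [Real.sin_sub_nat_mul_pi, ← mul_assoc, ← mul_pow]
    norm_num
  rw [hsin, real_sign_mul, real_sign_neg_one_pow, Real.sign_of_pos hpos, mul_one]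

lemma eVariationOn_real_sign_sin (n : ℕ) :
    eVariationOn (fun t => Real.sign (Real.sin t)) (Set.Icc 0 (n * π)) = 2 * n := by
  have hmono : Monotone fun k : ℕ => (k : ℝ) * π :=
    fun k l hkl => mul_le_mul_of_nonneg_right (Nat.cast_le.2 hkl) Real.pi_pos.le
  have hcell (k : ℕ) : eVariationOn (fun t => Real.sign (Real.sin t))
      (Set.Icc (k * π) ((k + 1 : ℕ) * π)) = 2 := by
    have hnonempty : (Set.Ioo (k * π) ((k + 1 : ℕ) * π)).Nonempty :=
      Set.nonempty_Ioo.2 (mul_lt_mul_of_pos_right (Nat.cast_lt.2 k.lt_succ_self) Real.pi_pos)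
    rw [eVariationOn_Icc_of_eqOn_Ioo hnonempty fun t => real_sign_sin_of_mem_Ioo]
    simp only [Real.sin_nat_mul_pi, Real.sign_zero, edist_dist, dist_zero_left, dist_zero_right]
    norm_num
  have hsum := eVariationOn.sum' (fun t => Real.sign (Real.sin t)) hmono (n := n)
  simp only [hcell, Nat.cast_zero, zero_mul] at hsum
  rw [← hsum, Finset.sum_const, Finset.card_range, nsmul_eq_mul, mul_comm]

section Chebyshev

open Polynomial.Chebyshev

lemma U_eval_neg_cos_mul_sin (n : ℕ) (θ : ℝ) :
    (U ℝ n).eval (-Real.cos θ) * Real.sin θ = (-1) ^ n * Real.sin ((n + 1 : ℕ) * θ) := by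
  have h := U_real_cos (π - θ) n
  rw [Real.cos_pi_sub, Real.sin_pi_sub] at h
  rw [h, Int.cast_natCast, ← Nat.cast_add_one, mul_sub, Real.sin_nat_mul_pi_sub, pow_succ]
  ring

lemma fspline_zero_neg_cos (s : ℕ) {θ : ℝ} (hθ : θ ∈ Set.Ioo 0 π) :
    fspline s 0 (-Real.cos θ) = Real.sign (Real.sin (s * θ)) := by
  cases s with
  | zero => simp [fspline]
  | succ n =>
    have hsin : Real.sign (Real.sin θ) = 1 :=
      Real.sign_of_pos (Real.sin_pos_of_mem_Ioo hθ)
    calc fspline (n + 1) 0 (-Real.cos θ)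
        = (-1) ^ n * Real.sign ((U ℝ n).eval (-Real.cos θ)) := by simp [fspline]
      _ = (-1) ^ n * Real.sign ((U ℝ n).eval (-Real.cos θ) * Real.sin θ) := by
        rw [real_sign_mul, hsin, mul_one]
      _ = Real.sign (Real.sin ((n + 1 : ℕ) * θ)) := by
        rw [U_eval_neg_cos_mul_sin, real_sign_mul, real_sign_neg_one_pow, ← mul_assoc, ← mul_pow]
        norm_num

end Chebyshev

lemma abs_fspline_zero_le_one (s : ℕ) (x : ℝ) : |fspline s 0 x| ≤ 1 := by
  simpa [fspline, abs_mul] using abs_real_sign_le_one _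

lemma abs_fspline_zero_apply_one {s : ℕ} (hs : 0 < s) : |fspline s 0 1| = 1 := by
  simp [fspline, Real.sign_of_pos (Nat.cast_pos.2 hs : (0 : ℝ) < s)]

lemma iSup_abs_fspline_zero {s : ℕ} (hs : 0 < s) :
    (⨆ x : Set.Icc (-1 : ℝ) 1, |fspline s 0 x|) = 1 :=
  IsGreatest.csSup_eq ⟨⟨⟨1, by norm_num⟩, abs_fspline_zero_apply_one hs⟩,
    Set.forall_mem_range.2 fun x => abs_fspline_zero_le_one s x⟩

lemma truncated_fspline_zero_neg_cos (s : ℕ) {θ : ℝ} (hθ : θ ∈ Set.Icc 0 π) :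
    (if -Real.cos θ ∈ Set.Ioo (-1 : ℝ) 1 then fspline s 0 (-Real.cos θ) else 0) =
      Real.sign (Real.sin (s * θ)) := by
  rcases hθ.1.eq_or_lt with rfl | hpos
  · simp
  rcases hθ.2.eq_or_lt with rfl | hlt
  · simp
  have hcos : -Real.cos θ ∈ Set.Ioo (-1 : ℝ) 1 := by
    have h0 := Real.strictAntiOn_cos ⟨le_rfl, Real.pi_pos.le⟩ hθ hpos
    have hπ := Real.strictAntiOn_cos hθ ⟨Real.pi_pos.le, le_rfl⟩ hlt
    rw [Real.cos_zero] at h0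
    rw [Real.cos_pi] at hπ
    constructor <;> linarith
  rw [if_pos hcos, fspline_zero_neg_cos s ⟨hpos, hlt⟩]

lemma eVariationOn_truncated_fspline_zero (s : ℕ) :
    eVariationOn (fun x : ℝ => if x ∈ Set.Ioo (-1 : ℝ) 1 then fspline s 0 x else 0) Set.univ =
      2 * s := by
  set f : ℝ → ℝ := fun x => if x ∈ Set.Ioo (-1 : ℝ) 1 then fspline s 0 x else 0
  have hleft (x : ℝ) (hx : x ≤ -1) : f x = f (-1) := by simp [f, hx.not_gt]
  have hright (x : ℝ) (hx : 1 ≤ x) : f x = f 1 := by simp [f, hx.not_gt]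
  have hmono : MonotoneOn (fun θ : ℝ => s * θ) (Set.Icc 0 π) :=
    fun _ _ _ _ h => mul_le_mul_of_nonneg_left h s.cast_nonneg
  calc eVariationOn f Set.univ
      = eVariationOn f (Set.Icc (-1) 1) := eVariationOn_univ_eq_Icc (by norm_num) hleft hright
    _ = eVariationOn (fun θ => f (-Real.cos θ)) (Set.Icc 0 π) := (eVariationOn_comp_neg_cos f).symm
    _ = eVariationOn ((fun t => Real.sign (Real.sin t)) ∘ fun θ => s * θ) (Set.Icc 0 π) :=
      eVariationOn.congr fun θ => truncated_fspline_zero_neg_cos s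
    _ = eVariationOn (fun t => Real.sign (Real.sin t)) (Set.Icc 0 (s * π)) := by
      rw [eVariationOn.comp_eq_of_monotoneOn _ _ hmono,
        Set.image_mul_left_Icc s.cast_nonneg Real.pi_pos.le, mul_zero]
    _ = 2 * s := eVariationOn_real_sign_sin s

/-- The angles `k π / s`: the points `-cos (k π / s)` with `0 < k < s` are the zeros of `U_{s-1}` in
increasing order, and `k = 0`, `k = s` give the endpoints of `[-1, 1]`. -/
noncomputable def nodeAngle (s k : ℕ) : ℝ := k * π / s

@[simp]
lemma nodeAngle_zero (s : ℕ) : nodeAngle s 0 = 0 := by simp [nodeAngle]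

lemma nodeAngle_self {s : ℕ} (hs : 0 < s) : nodeAngle s s = π := by
  unfold nodeAngle
  field_simp

lemma nodeAngle_two_mul_self {m : ℕ} (hm : 0 < m) : nodeAngle (2 * m) m = π / 2 := by
  unfold nodeAngle
  push_cast
  field_simp

lemma monotone_nodeAngle (s : ℕ) : Monotone (nodeAngle s) := by
  intro k l hkl
  unfold nodeAngle
  gcongr

lemma nodeAngle_mem_Icc {s k : ℕ} (hs : 0 < s) (hk : k ≤ s) : nodeAngle s k ∈ Set.Icc 0 π :=
  ⟨nodeAngle_zero s ▸ monotone_nodeAngle s k.zero_le,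
    nodeAngle_self hs ▸ monotone_nodeAngle s hk⟩

lemma Icc_nodeAngle_subset {s k : ℕ} (hk : k < s) :
    Set.Icc (nodeAngle s k) (nodeAngle s (k + 1)) ⊆ Set.Icc 0 π :=
  Set.Icc_subset_Icc (nodeAngle_mem_Icc (by lia) hk.le).1 (nodeAngle_mem_Icc (by lia) hk).2

lemma fspline_zero_of_mem_Ioo_node {s k : ℕ} (hk : k < s) {x : ℝ}
    (hx : x ∈ Set.Ioo (-Real.cos (nodeAngle s k)) (-Real.cos (nodeAngle s (k + 1)))) :
    fspline s 0 x = (-1) ^ k := by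
  have hs : (0 : ℝ) < s := Nat.cast_pos.2 (by lia)
  have hleft := nodeAngle_mem_Icc (by lia) hk.le
  have hright := nodeAngle_mem_Icc (by lia) (Nat.succ_le_of_lt hk)
  obtain ⟨θ, hθ, rfl⟩ : x ∈ (fun θ => -Real.cos θ) '' Set.Icc 0 π := by
    rw [image_neg_cos_Icc]
    exact ⟨(neg_le_neg (Real.cos_le_one _)).trans hx.1.le,
      hx.2.le.trans (neg_le.1 (Real.neg_one_le_cos _))⟩
  have hlt : nodeAngle s k < θ := monotoneOn_neg_cos.reflect_lt hleft hθ hx.1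
  have hgt : θ < nodeAngle s (k + 1) := monotoneOn_neg_cos.reflect_lt hθ hright hx.2
  rw [fspline_zero_neg_cos s ⟨hleft.1.trans_lt hlt, hgt.trans_le hright.2⟩]
  apply real_sign_sin_of_mem_Ioo
  unfold nodeAngle at hlt hgt
  rw [div_lt_iff₀' hs] at hlt
  rw [lt_div_iff₀' hs] at hgt
  exact ⟨hlt, hgt⟩

lemma intervalIntegrable_fspline_zero (s : ℕ) (a b : ℝ) :
    IntervalIntegrable (fspline s 0) MeasureTheory.volume a b := by
  have hmeas : Measurable (fspline s 0) :=
    (measurable_real_sign.comp (Polynomial.continuous _).measurable).const_mul _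
  refine (intervalIntegrable_const (c := (1 : ℝ))).mono_fun hmeas.aestronglyMeasurable
    (.of_forall fun x => ?_)
  simpa using abs_fspline_zero_le_one s x

lemma fspline_one_neg_one (s : ℕ) : fspline s 1 (-1) = 0 :=
  intervalIntegral.integral_same

lemma fspline_one_sub (s : ℕ) (x y : ℝ) :
    fspline s 1 y - fspline s 1 x = ∫ t in x..y, fspline s 0 t :=
  intervalIntegral.integral_interval_sub_left (intervalIntegrable_fspline_zero s _ _)
    (intervalIntegrable_fspline_zero s _ _)

lemma fspline_one_neg_cos_sub {s k : ℕ} (hk : k < s) {θ φ : ℝ}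
    (hθ : θ ∈ Set.Icc (nodeAngle s k) (nodeAngle s (k + 1)))
    (hφ : φ ∈ Set.Icc (nodeAngle s k) (nodeAngle s (k + 1))) :
    fspline s 1 (-Real.cos φ) - fspline s 1 (-Real.cos θ) =
      (-1) ^ k * (Real.cos θ - Real.cos φ) := by
  have hmaps : Set.MapsTo (fun θ => -Real.cos θ) (Set.Icc (nodeAngle s k) (nodeAngle s (k + 1)))
      (Set.Icc (-Real.cos (nodeAngle s k)) (-Real.cos (nodeAngle s (k + 1)))) :=
    (monotoneOn_neg_cos.mono (Icc_nodeAngle_subset hk)).mapsTo_Icc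
  have hsubset : Set.uIoo (-Real.cos θ) (-Real.cos φ) ⊆
      Set.Ioo (-Real.cos (nodeAngle s k)) (-Real.cos (nodeAngle s (k + 1))) :=
    Set.Ioo_subset_Ioo (le_inf (hmaps hθ).1 (hmaps hφ).1) (sup_le (hmaps hθ).2 (hmaps hφ).2)
  rw [fspline_one_sub, intervalIntegral.integral_congr_uIoo
    fun x hx => fspline_zero_of_mem_Ioo_node hk (hsubset hx)]
  simp only [intervalIntegral.integral_const, smul_eq_mul]
  ring

lemma eVariationOn_fspline_one {s : ℕ} (hs : 0 < s) :
    eVariationOn (fspline s 1) (Set.Icc (-1) 1) = 2 := by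
  have hcell : ∀ k < s, ∀ θ ∈ Set.Icc (nodeAngle s k) (nodeAngle s (k + 1)),
      ∀ φ ∈ Set.Icc (nodeAngle s k) (nodeAngle s (k + 1)),
      edist (fspline s 1 (-Real.cos θ)) (fspline s 1 (-Real.cos φ)) =
        edist (-Real.cos θ) (-Real.cos φ) := by
    intro k hk θ hθ φ hφ
    rw [edist_dist, edist_dist, Real.dist_eq, Real.dist_eq, fspline_one_neg_cos_sub hk hφ hθ,
      abs_mul, abs_neg_one_pow, one_mul, neg_sub_neg]
  have hvar := eVariationOn_Icc_congr_edist_of_monotone (monotone_nodeAngle s) hcell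
  rw [nodeAngle_zero, nodeAngle_self hs] at hvar
  calc eVariationOn (fspline s 1) (Set.Icc (-1) 1)
      = eVariationOn (fun θ => fspline s 1 (-Real.cos θ)) (Set.Icc 0 π) :=
        (eVariationOn_comp_neg_cos _).symm
    _ = eVariationOn (fun θ => id (-Real.cos θ)) (Set.Icc 0 π) := hvar
    _ = eVariationOn id (Set.Icc (-1 : ℝ) 1) := eVariationOn_comp_neg_cos id
    _ = 2 := by
      rw [eVariationOn_id_Icc]
      norm_num

lemma tan_mul_sin_sub_add_sin_add {a : ℝ} (ha : Real.cos a ≠ 0) (b : ℝ) :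
    Real.tan a * (Real.sin (b - a) + Real.sin (b + a)) = Real.cos (b - a) - Real.cos (b + a) := by
  rw [Real.tan_eq_sin_div_cos, Real.cos_add, Real.cos_sub, Real.sin_add, Real.sin_sub]
  field_simp
  ring

lemma pi_div_two_mul_mem_Ioo {s : ℕ} (hs : 1 < s) : π / (2 * s) ∈ Set.Ioo 0 (π / 2) := by
  have hs' : (1 : ℝ) < s := Nat.one_lt_cast.2 hs
  exact ⟨by positivity, div_lt_div_of_pos_left Real.pi_pos (by norm_num) (by linarith)⟩

lemma tan_pi_div_two_mul_pos {s : ℕ} (hs : 1 < s) : 0 < Real.tan (π / (2 * s)) :=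
  Real.tan_pos_of_pos_of_lt_pi_div_two (pi_div_two_mul_mem_Ioo hs).1 (pi_div_two_mul_mem_Ioo hs).2

lemma cos_nodeAngle_sub_cos_nodeAngle_succ {s : ℕ} (hs : 1 < s) (k : ℕ) :
    Real.cos (nodeAngle s k) - Real.cos (nodeAngle s (k + 1)) =
      Real.tan (π / (2 * s)) * (Real.sin (nodeAngle s k) + Real.sin (nodeAngle s (k + 1))) := by
  obtain ⟨hpos, hlt⟩ := pi_div_two_mul_mem_Ioo hs
  have hcos : Real.cos (π / (2 * s)) ≠ 0 :=
    (Real.cos_pos_of_mem_Ioo ⟨by linarith, hlt⟩).ne'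
  have hleft : nodeAngle s k = (2 * k + 1) * (π / (2 * s)) - π / (2 * s) := by
    unfold nodeAngle
    field_simp
    ring
  have hright : nodeAngle s (k + 1) = (2 * k + 1) * (π / (2 * s)) + π / (2 * s) := by
    unfold nodeAngle
    push_cast
    field_simp
    ring
  rw [hleft, hright, tan_mul_sin_sub_add_sin_add hcos]

lemma fspline_one_neg_cos_nodeAngle {s : ℕ} (hs : 1 < s) {k : ℕ} (hk : k ≤ s) :
    fspline s 1 (-Real.cos (nodeAngle s k)) =
      (-1) ^ (k + 1) * (Real.tan (π / (2 * s)) * Real.sin (nodeAngle s k)) := by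
  induction k with
  | zero => simp [fspline_one_neg_one]
  | succ k ih =>
    have hle := monotone_nodeAngle s k.le_succ
    have hincrement := fspline_one_neg_cos_sub (Nat.lt_of_succ_le hk)
      (Set.left_mem_Icc.2 hle) (Set.right_mem_Icc.2 hle)
    rw [ih (by lia), cos_nodeAngle_sub_cos_nodeAngle_succ hs] at hincrement
    linear_combination hincrement

lemma abs_fspline_one_node_le {s : ℕ} (hs : 1 < s) {k : ℕ} (hk : k ≤ s) :
    |fspline s 1 (-Real.cos (nodeAngle s k))| ≤ Real.tan (π / (2 * s)) := by
  have htan := tan_pi_div_two_mul_pos hs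
  rw [fspline_one_neg_cos_nodeAngle hs hk, abs_mul, abs_neg_one_pow, one_mul, abs_mul,
    abs_of_pos htan]
  exact mul_le_of_le_one_right htan.le (Real.abs_sin_le_one _)

lemma exists_mem_Icc_nodeAngle {s : ℕ} (hs : 0 < s) {θ : ℝ} (hθ : θ ∈ Set.Icc 0 π) :
    ∃ k < s, θ ∈ Set.Icc (nodeAngle s k) (nodeAngle s (k + 1)) := by
  rcases hθ.1.eq_or_lt with rfl | hpos
  · exact ⟨0, hs, by simp, (nodeAngle_mem_Icc hs hs).1⟩
  have hunion := (monotone_nodeAngle s).biUnion_Ico_Ioc_map_succ 0 s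
  rw [nodeAngle_zero, nodeAngle_self hs] at hunion
  have hmem := hunion.ge ⟨hpos, hθ.2⟩
  simp only [Set.mem_iUnion] at hmem
  obtain ⟨k, hk, hθk⟩ := hmem
  exact ⟨k, hk.2, Set.Ioc_subset_Icc_self hθk⟩

lemma abs_fspline_one_le {s : ℕ} (hs : 1 < s) {x : ℝ} (hx : x ∈ Set.Icc (-1 : ℝ) 1) :
    |fspline s 1 x| ≤ Real.tan (π / (2 * s)) := by
  rw [← image_neg_cos_Icc] at hx
  obtain ⟨θ, hθ, rfl⟩ := hx
  obtain ⟨k, hk, hθk⟩ := exists_mem_Icc_nodeAngle (zero_lt_one.trans hs) hθ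
  have hle := monotone_nodeAngle s k.le_succ
  have hcos_left : -Real.cos (nodeAngle s k) ≤ -Real.cos θ :=
    monotoneOn_neg_cos (nodeAngle_mem_Icc (by lia) hk.le) hθ hθk.1
  have hcos_right : -Real.cos θ ≤ -Real.cos (nodeAngle s (k + 1)) :=
    monotoneOn_neg_cos hθ (nodeAngle_mem_Icc (by lia) hk) hθk.2
  have hfrom_left := fspline_one_neg_cos_sub hk (Set.left_mem_Icc.2 hle) hθk
  have hto_right := fspline_one_neg_cos_sub hk hθk (Set.right_mem_Icc.2 hle)
  have hleft := abs_le.1 (abs_fspline_one_node_le hs hk.le)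
  have hright := abs_le.1 (abs_fspline_one_node_le hs (Nat.succ_le_of_lt hk))
  rw [abs_le]
  rcases neg_one_pow_eq_or ℝ k with hsign | hsign <;>
    rw [hsign] at hfrom_left hto_right <;> constructor <;> linarith

lemma abs_fspline_one_apply_zero {s : ℕ} (hs : 0 < s) (hs_even : Even s) :
    |fspline s 1 0| = Real.tan (π / (2 * s)) := by
  obtain ⟨m, rfl⟩ := hs_even.two_dvd
  have hs_one : 1 < 2 * m := by lia
  have hnode := fspline_one_neg_cos_nodeAngle hs_one (k := m) (by lia)
  rw [nodeAngle_two_mul_self (by lia), Real.cos_pi_div_two, neg_zero, Real.sin_pi_div_two,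
    mul_one] at hnode
  rw [hnode, abs_mul, abs_neg_one_pow, one_mul, abs_of_pos (tan_pi_div_two_mul_pos hs_one)]

lemma iSup_abs_fspline_one {s : ℕ} (hs : 0 < s) (hs_even : Even s) :
    (⨆ x : Set.Icc (-1 : ℝ) 1, |fspline s 1 x|) = |fspline s 1 0| := by
  have hs_one : 1 < s := by grind
  refine IsGreatest.csSup_eq ⟨⟨⟨0, by norm_num⟩, rfl⟩, Set.forall_mem_range.2 fun x => ?_⟩
  rw [abs_fspline_one_apply_zero hs hs_even]
  exact abs_fspline_one_le hs_one x.2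

theorem sup_norm_and_variation_of_f0_and_f1_general (s : ℕ) (hs : 0 < s) :
    (⨆ x : Set.Icc (-1 : ℝ) 1, |fspline s 0 x|) = 1 ∧
    eVariationOn (fun x : ℝ => if x ∈ Set.Ioo (-1 : ℝ) 1 then fspline s 0 x else 0)
        Set.univ = (2 * s : ℕ) ∧
    eVariationOn (fspline s 1) (Set.Icc (-1 : ℝ) 1) = 2 ∧
    (Even s →
      (⨆ x : Set.Icc (-1 : ℝ) 1, |fspline s 1 x|) = |fspline s 1 0| ∧
      |fspline s 1 0| = Real.tan (π / (2 * s))) :=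
  ⟨iSup_abs_fspline_zero hs, by simpa using eVariationOn_truncated_fspline_zero s,
    eVariationOn_fspline_one hs,
    fun hs_even => ⟨iSup_abs_fspline_one hs hs_even, abs_fspline_one_apply_zero hs hs_even⟩⟩

theorem sup_norm_and_variation_of_f0_and_f1
    (s : ℕ) (hs_even : Even s) (hs : 6 ≤ s) :
    (⨆ x : Set.Icc (-1 : ℝ) 1, |fspline s 0 x|) = 1 ∧
    eVariationOn (fun x : ℝ => if x ∈ Set.Ioo (-1 : ℝ) 1 then fspline s 0 x else 0)
        Set.univ = (2 * s : ℕ) ∧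
    eVariationOn (fspline s 1) (Set.Icc (-1 : ℝ) 1) = 2 ∧
    (⨆ x : Set.Icc (-1 : ℝ) 1, |fspline s 1 x|) = |fspline s 1 0| ∧
    |fspline s 1 0| = Real.tan (π / (2 * s)) := by
  obtain ⟨hsup, hvar_zero, hvar_one, heven⟩ :=
    sup_norm_and_variation_of_f0_and_f1_general s (by lia)
  exact ⟨hsup, hvar_zero, hvar_one, heven hs_even⟩
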